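/- arXiv:1504.03432 — 10 statements merged into one kernel-verified Lean document; each statement's English description precedes it below -/
import Mathlib

section
/- Let 𝔤 be a finite-dimensional real Lie algebra equipped with an ad-invariant inner product ⟨·,·⟩, let 𝔥 be a Lie subalgebra of 𝔤, and let 𝔭 be the orthogonal complement of 𝔥 in 𝔤. Then the subspace 𝔭 + [𝔭,𝔭] (the linear span of 𝔭 together with all brackets [X,Y] with X,Y ∈ 𝔭) is an ideal of 𝔤, the set 𝔲 = {Z ∈ 𝔥 : [Z,X] = 0 for all X ∈ 𝔭} is an ideal of 𝔤, and 𝔭 + [𝔭,𝔭] is the orthogonal complement of 𝔲 in 𝔤. -/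
/-!
The theorem rests on identifying `𝔲` with the orthogonal complement of `𝔮 = 𝔭 + [𝔭,𝔭]`
(`orthogonal_iff_mem_u`). A vector `Z` orthogonal to `𝔭` lies in `𝔭ᗮ = 𝔥`, and ad-invariance
turns `Z ⊥ [𝔭,𝔭]` into `[Z,𝔭] ⊥ 𝔭`, that is `[Z,𝔭] ⊆ 𝔥`. Since `[𝔥,𝔭] ⊆ 𝔭`, the space `[Z,𝔭]`
lies in `𝔥 ∩ 𝔭 = 0`. Taking orthogonal complements once more gives `𝔮 = 𝔲ᗮ`.

That `𝔲` is an ideal follows from `𝔤 = 𝔥 + 𝔭`: brackets with `𝔭` kill `𝔲` by definition, and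
brackets with `𝔥` preserve it by the Jacobi identity and `[𝔥,𝔭] ⊆ 𝔭`. Ad-invariance makes the
orthogonal complement of an ideal an ideal, so `𝔮 = 𝔲ᗮ` is an ideal as well.
-/

/-- The linear span of all brackets `⁅x, y⁆` with `x ∈ p` and `y ∈ q`. -/
def bracketSpan {L : Type*} [LieRing L] [LieAlgebra ℝ L] (p q : Submodule ℝ L) :
    Submodule ℝ L :=
  Submodule.span ℝ {z : L | ∃ x ∈ p, ∃ y ∈ q, ⁅x, y⁆ = z}

/-- A linear subspace of a Lie algebra is an ideal if it is closed under brackets with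
arbitrary elements of the Lie algebra. -/
def IsLieIdealSubmodule {L : Type*} [LieRing L] [LieAlgebra ℝ L] (I : Submodule ℝ L) : Prop :=
  ∀ x : L, ∀ y ∈ I, ⁅x, y⁆ ∈ I

/-- Orthogonal decomposition along a subspace, for a positive definite symmetric form. -/
lemma exists_orthogonal_decomp {L : Type*} [AddCommGroup L] [Module ℝ L] [FiniteDimensional ℝ L]
    (B : L →ₗ[ℝ] L →ₗ[ℝ] ℝ) (hsymm : ∀ x y : L, B x y = B y x)
    (hpos : ∀ x : L, x ≠ 0 → 0 < B x x) (W : Submodule ℝ L) (x : L) :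
    ∃ w ∈ W, ∃ z, (∀ v ∈ W, B v z = 0) ∧ w + z = x := by
  have hrefl : LinearMap.BilinForm.IsRefl B := fun a b h => by rw [hsymm]; exact h
  have hdisj : Disjoint W (LinearMap.BilinForm.orthogonal B W) := by
    rw [Submodule.disjoint_def]
    intro a ha ha'
    by_contra hne
    exact (hpos a hne).ne' (ha' a ha)
  have hcompl := (LinearMap.BilinForm.isCompl_orthogonal_iff_disjoint hrefl).2 hdisj
  have hx : x ∈ W ⊔ LinearMap.BilinForm.orthogonal B W := by
    rw [hcompl.sup_eq_top]; trivial
  obtain ⟨w, hw, z, hz, h⟩ := Submodule.mem_sup.1 hx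
  exact ⟨w, hw, z, fun v hv => hz v hv, h⟩

/-- The inclusion `Wᗮᗮ ≤ W` for a positive definite symmetric form. -/
lemma mem_of_orthogonal_orthogonal {L : Type*} [AddCommGroup L] [Module ℝ L]
    [FiniteDimensional ℝ L]
    (B : L →ₗ[ℝ] L →ₗ[ℝ] ℝ) (hsymm : ∀ x y : L, B x y = B y x)
    (hpos : ∀ x : L, x ≠ 0 → 0 < B x x) (W : Submodule ℝ L) (x : L)
    (hx : ∀ z, (∀ v ∈ W, B v z = 0) → B x z = 0) : x ∈ W := by
  obtain ⟨w, hw, z, hz, rfl⟩ := exists_orthogonal_decomp B hsymm hpos W x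
  have h := hx z hz
  rw [map_add, LinearMap.add_apply, hz w hw, zero_add] at h
  have hz0 : z = 0 := by
    by_contra hne
    exact (hpos z hne).ne' h
  simpa [hz0] using hw

/-- Ad-invariance gives `[𝔥,𝔭] ⊆ 𝔭`. -/
lemma bracket_mem_p {L : Type*} [LieRing L] [LieAlgebra ℝ L]
    (B : L →ₗ[ℝ] L →ₗ[ℝ] ℝ)
    (hinv : ∀ x y w : L, B ⁅x, y⁆ w = - B y ⁅x, w⁆)
    (H : LieSubalgebra ℝ L) (p : Submodule ℝ L)
    (hp : ∀ x : L, x ∈ p ↔ ∀ y ∈ H, B x y = 0)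
    {x a : L} (hx : x ∈ H) (ha : a ∈ p) : ⁅x, a⁆ ∈ p := by
  rw [hp]
  intro y hy
  rw [hinv, (hp a).1 ha _ (H.lie_mem hx hy), neg_zero]

/-- The orthogonal complement of `𝔭 + [𝔭,𝔭]` is `𝔲`. -/
lemma orthogonal_iff_mem_u {L : Type*} [LieRing L] [LieAlgebra ℝ L] [FiniteDimensional ℝ L]
    (B : L →ₗ[ℝ] L →ₗ[ℝ] ℝ)
    (hsymm : ∀ x y : L, B x y = B y x)
    (hpos : ∀ x : L, x ≠ 0 → 0 < B x x)
    (hinv : ∀ x y w : L, B ⁅x, y⁆ w = - B y ⁅x, w⁆)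
    (H : LieSubalgebra ℝ L)
    (p : Submodule ℝ L)
    (hp : ∀ x : L, x ∈ p ↔ ∀ y ∈ H, B x y = 0)
    (u : Submodule ℝ L)
    (hu : ∀ x : L, x ∈ u ↔ x ∈ H ∧ ∀ w ∈ p, ⁅x, w⁆ = 0) (z : L) :
    (∀ v ∈ p ⊔ bracketSpan p p, B v z = 0) ↔ z ∈ u := by
  have hH : ∀ x : L, (∀ a ∈ p, B a x = 0) → x ∈ H := fun x hx =>
    mem_of_orthogonal_orthogonal B hsymm hpos H.toSubmodule x fun y hy => by
      rw [hsymm]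
      exact hx y ((hp y).2 fun h hh => by rw [hsymm]; exact hy h hh)
  rw [hu]
  constructor
  · intro hz
    have hzH : z ∈ H := hH z fun a ha => hz a (Submodule.mem_sup_left ha)
    refine ⟨hzH, fun a ha => ?_⟩
    have hza : ⁅z, a⁆ ∈ H := hH _ fun b hb => by
      have h := hz ⁅a, b⁆ (Submodule.mem_sup_right (Submodule.subset_span ⟨a, ha, b, hb, rfl⟩))
      rw [hinv] at h
      rw [← lie_skew, map_neg]
      exact h
    by_contra hne
    exact (hpos _ hne).ne' ((hp _).1 (bracket_mem_p B hinv H p hp hzH ha) _ hza)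
  · rintro ⟨hzH, hz⟩ v hv
    have hle : p ⊔ bracketSpan p p ≤ LinearMap.ker (B.flip z) := by
      refine sup_le (fun a ha => (hp a).1 ha z hzH) (Submodule.span_le.2 ?_)
      rintro _ ⟨a, _, b, _, rfl⟩
      have h : ⁅a, z⁆ = 0 := by rw [← lie_skew, hz a ‹_›, neg_zero]
      change B ⁅a, b⁆ z = 0
      rw [hinv, h, map_zero, neg_zero]
    exact hle hv

/-- Let `𝔤` be a finite-dimensional real Lie algebra with an ad-invariant inner product `B`,
`𝔥` a Lie subalgebra and `𝔭` the orthogonal complement of `𝔥` in `𝔤`.  Then `𝔭 + [𝔭,𝔭]` is an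
ideal of `𝔤`, the set `𝔲 = {Z ∈ 𝔥 : [Z,𝔭] = 0}` is an ideal of `𝔤`, and `𝔭 + [𝔭,𝔭]` is the
orthogonal complement of `𝔲` in `𝔤`. -/
theorem stmt0 {L : Type*} [LieRing L] [LieAlgebra ℝ L] [FiniteDimensional ℝ L]
    (B : L →ₗ[ℝ] L →ₗ[ℝ] ℝ)
    (hsymm : ∀ x y : L, B x y = B y x)
    (hpos : ∀ x : L, x ≠ 0 → 0 < B x x)
    (hinv : ∀ x y w : L, B ⁅x, y⁆ w = - B y ⁅x, w⁆)
    (H : LieSubalgebra ℝ L)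
    (p : Submodule ℝ L)
    (hp : ∀ x : L, x ∈ p ↔ ∀ y ∈ H, B x y = 0)
    (u : Submodule ℝ L)
    (hu : ∀ x : L, x ∈ u ↔ x ∈ H ∧ ∀ w ∈ p, ⁅x, w⁆ = 0) :
    IsLieIdealSubmodule (p ⊔ bracketSpan p p) ∧
    IsLieIdealSubmodule u ∧
    (∀ x : L, x ∈ p ⊔ bracketSpan p p ↔ ∀ y ∈ u, B x y = 0) := by
  have hperp := orthogonal_iff_mem_u B hsymm hpos hinv H p hp u hu
  have hq : ∀ x : L, x ∈ p ⊔ bracketSpan p p ↔ ∀ y ∈ u, B x y = 0 := fun x =>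
    ⟨fun hx y hy => (hperp y).2 hy x hx, fun hx =>
      mem_of_orthogonal_orthogonal B hsymm hpos _ x fun z hz => hx z ((hperp z).1 hz)⟩
  have hideal : IsLieIdealSubmodule u := by
    intro x z hz
    obtain ⟨hzH, hzp⟩ := (hu z).1 hz
    obtain ⟨h, hh, a, ha, rfl⟩ := exists_orthogonal_decomp B hsymm hpos H.toSubmodule x
    have hap : a ∈ p := (hp a).2 fun y hy => by rw [hsymm]; exact ha y hy
    have haz : ⁅a, z⁆ = 0 := by rw [← lie_skew, hzp a hap, neg_zero]
    rw [add_lie, haz, add_zero, hu]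
    refine ⟨H.lie_mem hh hzH, fun w hw => ?_⟩
    rw [lie_lie, hzp w hw, hzp _ (bracket_mem_p B hinv H p hp hh hw), lie_zero, sub_zero]
  refine ⟨fun x v hv => ?_, hideal, hq⟩
  rw [hq] at hv ⊢
  intro y hy
  rw [hinv, hv _ (hideal x y hy), neg_zero]
end

section
/- Under the stated hypotheses, for every index i one has 𝔤ᵢ = 𝔭ᵢ + [𝔭ᵢ,𝔭ᵢ], and each 𝔤ᵢ is an ideal of 𝔤. -/
/-!
Ad-invariance together with `[𝔭ᵢ, 𝔭ⱼ] = 0` gives `⟨[𝔭ᵢ, 𝔭ᵢ], 𝔭ⱼ⟩ = -⟨𝔭ᵢ, [𝔭ᵢ, 𝔭ⱼ]⟩ = 0` for `j ≠ i`, so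
the `𝔭`-component of an element of `[𝔭ᵢ, 𝔭ᵢ]` lies in `𝔭ᵢ`; its `𝔥`-component then lies in `𝔥ᵢ`.
Hence `𝔤ᵢ = 𝔭ᵢ + [𝔭ᵢ, 𝔭ᵢ]`. For the ideal property, write `𝔤 = 𝔥 + ∑ 𝔭ⱼ`. By the Jacobi identity
`𝔥` preserves `𝔭ᵢ + [𝔭ᵢ, 𝔭ᵢ]` and `𝔭ⱼ` kills it for `j ≠ i`, while `𝔭ᵢ` maps `𝔤ᵢ ⊆ 𝔥 + 𝔭ᵢ` into
`𝔭ᵢ + [𝔭ᵢ, 𝔭ᵢ]`.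
-/

/-- With respect to a positive definite form, every vector is the sum of a vector of `H` and a
vector orthogonal to `H`: the form restricted to `H` represents every functional on `H`. -/
lemma exists_sub_orthogonal {L : Type*} [AddCommGroup L] [Module ℝ L] [FiniteDimensional ℝ L]
    (B : L →ₗ[ℝ] L →ₗ[ℝ] ℝ) (hpos : ∀ x : L, x ≠ 0 → 0 < B x x) (H : Submodule ℝ L) (x : L) :
    ∃ h ∈ H, ∀ y ∈ H, B (x - h) y = 0 := by
  let f : H →ₗ[ℝ] Module.Dual ℝ H := B.domRestrict₁₂ H H
  have hf : Function.Injective f := by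
    rw [injective_iff_map_eq_zero]
    intro a ha
    by_contra hne
    have h1 : f a a = 0 := by rw [ha]; rfl
    exact (hpos (a : L) (by simpa using hne)).ne' h1
  have hs : Function.Surjective f :=
    (LinearMap.injective_iff_surjective_of_finrank_eq_finrank
      (Subspace.dual_finrank_eq (K := ℝ) (V := H)).symm).1 hf
  obtain ⟨h, hh⟩ := hs ((B x).domRestrict H)
  refine ⟨h, h.2, fun y hy => ?_⟩
  have h2 : B h y = B x y := LinearMap.congr_fun hh ⟨y, hy⟩
  rw [map_sub, LinearMap.sub_apply, h2, sub_self]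

/-- A vector of an orthogonal sum that is orthogonal to all summands but one lies in that one. -/
lemma mem_of_orthogonal_others {L ι : Type*} [AddCommGroup L] [Module ℝ L]
    (B : L →ₗ[ℝ] L →ₗ[ℝ] ℝ) (hpos : ∀ x : L, x ≠ 0 → 0 < B x x) (P : ι → Submodule ℝ L)
    (hPorth : ∀ i j, i ≠ j → ∀ x ∈ P i, ∀ y ∈ P j, B x y = 0) (i : ι) (q : L)
    (hq : q ∈ ⨆ j, P j) (hqo : ∀ j, j ≠ i → ∀ z ∈ P j, B q z = 0) : q ∈ P i := by
  rw [iSup_split_single P i] at hq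
  obtain ⟨a, ha, b, hb, rfl⟩ := Submodule.mem_sup.1 hq
  have hB : ∀ v, (∀ j, j ≠ i → ∀ z ∈ P j, B v z = 0) → B v b = 0 := by
    intro v hv
    have hle : (⨆ (j) (_ : j ≠ i), P j) ≤ LinearMap.ker (B v) :=
      iSup₂_le fun j hj z hz => hv j hj z hz
    exact hle hb
  have h1 := hB (a + b) hqo
  have h2 := hB a fun j hj z hz => hPorth i j hj.symm a ha z hz
  have hb0 : b = 0 := by
    by_contra hne
    have := hpos b hne
    rw [map_add, LinearMap.add_apply] at h1
    linarith
  simpa [hb0] using ha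

/-- To check that `⁅x, ·⁆` maps `p + [p, p]` into a subspace, it suffices to check it on `p` and on
brackets of elements of `p`. -/
lemma lie_mem_of_mem_sup_bracketSpan {L : Type*} [LieRing L] [LieAlgebra ℝ L]
    (p V : Submodule ℝ L) (x : L) (h1 : ∀ y ∈ p, ⁅x, y⁆ ∈ V)
    (h2 : ∀ y ∈ p, ∀ z ∈ p, ⁅x, ⁅y, z⁆⁆ ∈ V) : ∀ y ∈ p ⊔ bracketSpan p p, ⁅x, y⁆ ∈ V := by
  have hle : p ⊔ bracketSpan p p ≤ V.comap (LieAlgebra.ad ℝ L x : L →ₗ[ℝ] L) := by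
    refine sup_le (fun y hy => h1 y hy) (Submodule.span_le.2 ?_)
    rintro _ ⟨y, hy, z, hz, rfl⟩
    exact h2 y hy z hz
  exact fun y hy => hle hy

theorem stmt1 {L : Type*} [LieRing L] [LieAlgebra ℝ L] [FiniteDimensional ℝ L]
    -- an ad-invariant inner product on the Lie algebra `L`
    (B : L →ₗ[ℝ] L →ₗ[ℝ] ℝ)
    (hsymm : ∀ x y : L, B x y = B y x)
    (hpos : ∀ x : L, x ≠ 0 → 0 < B x x)
    (hinv : ∀ x y w : L, B ⁅x, y⁆ w = - B y ⁅x, w⁆)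
    -- a Lie subalgebra `𝔥` and its orthogonal complement `𝔭`
    (H : LieSubalgebra ℝ L)
    (p : Submodule ℝ L)
    (hp : ∀ x : L, x ∈ p ↔ ∀ y ∈ H, B x y = 0)
    -- the decomposition `𝔭 = 𝔭₁ ⊕ ⋯ ⊕ 𝔭ₖ`
    (k : ℕ) (P : Fin k → Submodule ℝ L)
    (hPsum : (⨆ i, P i) = p)
    (hPinvar : ∀ i, ∀ h ∈ H, ∀ x ∈ P i, ⁅h, x⁆ ∈ P i)
    (hPne : ∀ i, P i ≠ ⊥)
    (hPirr : ∀ i, ∀ q : Submodule ℝ L, q ≤ P i →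
      (∀ h ∈ H, ∀ x ∈ q, ⁅h, x⁆ ∈ q) → q = ⊥ ∨ q = P i)
    (hPorth : ∀ i j, i ≠ j → ∀ x ∈ P i, ∀ y ∈ P j, B x y = 0)
    (hPbr : ∀ i j, i ≠ j → ∀ x ∈ P i, ∀ y ∈ P j, ⁅x, y⁆ = 0)
    -- the subspaces `𝔥ᵢ = (𝔭ᵢ + [𝔭ᵢ,𝔭ᵢ]) ∩ 𝔥` and `𝔤ᵢ = 𝔥ᵢ + 𝔭ᵢ`
    (Hs : Fin k → Submodule ℝ L)
    (hHs : ∀ i, Hs i = (P i ⊔ bracketSpan (P i) (P i)) ⊓ H.toSubmodule)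
    (G : Fin k → Submodule ℝ L)
    (hG : ∀ i, G i = Hs i ⊔ P i)
    :
    ∀ i, G i = P i ⊔ bracketSpan (P i) (P i) ∧ IsLieIdealSubmodule (G i) := by
  have hdec : ∀ x : L, ∃ h ∈ H, x - h ∈ ⨆ j, P j := by
    intro x
    obtain ⟨h, hh, ho⟩ := exists_sub_orthogonal B hpos H.toSubmodule x
    exact ⟨h, hh, by rw [hPsum, hp]; exact ho⟩
  intro i
  have hbr : ∀ x ∈ P i, ∀ y ∈ P i, ⁅x, y⁆ ∈ P i ⊔ bracketSpan (P i) (P i) := fun x hx y hy =>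
    Submodule.mem_sup_right (Submodule.subset_span ⟨x, hx, y, hy, rfl⟩)
  have hcomp : ∀ x ∈ P i, ∀ y ∈ P i, ∃ h ∈ H, ⁅x, y⁆ - h ∈ P i := by
    intro x hx y hy
    obtain ⟨h, hh, hq⟩ := hdec ⁅x, y⁆
    refine ⟨h, hh, mem_of_orthogonal_others B hpos P hPorth i _ hq fun j hj z hz => ?_⟩
    have hz' : z ∈ p := hPsum ▸ Submodule.mem_iSup_of_mem j hz
    have h1 : B h z = 0 := by rw [hsymm]; exact (hp z).1 hz' h hh
    rw [map_sub, LinearMap.sub_apply, h1, hinv, hPbr i j hj.symm x hx z hz]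
    simp
  have hGi : G i = P i ⊔ bracketSpan (P i) (P i) := by
    rw [hG, hHs]
    refine le_antisymm (sup_le inf_le_left le_sup_left) (sup_le le_sup_right ?_)
    refine Submodule.span_le.2 ?_
    rintro _ ⟨x, hx, y, hy, rfl⟩
    obtain ⟨h, hh, hq⟩ := hcomp x hx y hy
    refine Submodule.mem_sup.2 ⟨h, ⟨?_, hh⟩, _, hq, add_sub_cancel _ _⟩
    have := Submodule.sub_mem _ (hbr x hx y hy) (Submodule.mem_sup_left hq)
    rwa [sub_sub_cancel] at this
  refine ⟨hGi, ?_⟩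
  rw [hGi]
  intro x y hy
  obtain ⟨h, hh, hq⟩ := hdec x
  have hH : ⁅h, y⁆ ∈ P i ⊔ bracketSpan (P i) (P i) := by
    refine lie_mem_of_mem_sup_bracketSpan _ _ h
      (fun u hu => Submodule.mem_sup_left (hPinvar i h hh u hu)) (fun u hu v hv => ?_) y hy
    rw [leibniz_lie]
    exact Submodule.add_mem _ (hbr _ (hPinvar i h hh u hu) v hv)
      (hbr u hu _ (hPinvar i h hh v hv))
  have hle : (⨆ j, P j) ≤
      (P i ⊔ bracketSpan (P i) (P i)).comap (LieAlgebra.ad ℝ L y : L →ₗ[ℝ] L) := by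
    refine iSup_le fun j z hz => ?_
    change ⁅y, z⁆ ∈ P i ⊔ bracketSpan (P i) (P i)
    rw [← lie_skew]
    refine Submodule.neg_mem _ ?_
    by_cases hj : j = i
    · subst hj
      refine lie_mem_of_mem_sup_bracketSpan _ _ z (hbr z hz) (fun u hu v hv => ?_) y hy
      -- `⁅u, v⁆ = w + (⁅u, v⁆ - w)` with `w ∈ 𝔥` and `⁅u, v⁆ - w ∈ 𝔭ⱼ`
      obtain ⟨w, hw, hr⟩ := hcomp u hu v hv
      rw [← add_sub_cancel w ⁅u, v⁆, lie_add, ← lie_skew z w]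
      exact Submodule.add_mem _
        (Submodule.neg_mem _ (Submodule.mem_sup_left (hPinvar j w hw z hz))) (hbr z hz _ hr)
    · refine lie_mem_of_mem_sup_bracketSpan _ _ z (fun u hu => ?_) (fun u hu v hv => ?_) y hy
      · rw [hPbr j i hj z hz u hu]
        exact Submodule.zero_mem _
      · rw [leibniz_lie, hPbr j i hj z hz u hu, hPbr j i hj z hz v hv, zero_lie, lie_zero, add_zero]
        exact Submodule.zero_mem _
  have hP : ⁅x - h, y⁆ ∈ P i ⊔ bracketSpan (P i) (P i) := by
    rw [← lie_skew]
    exact Submodule.neg_mem _ (hle hq)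
  rw [← add_sub_cancel h x, add_lie]
  exact Submodule.add_mem _ hH hP
end

section
/- Under the stated hypotheses, for all indices i ≠ j one has ⟨𝔤ᵢ,𝔤ⱼ⟩ = 0 and [𝔤ᵢ,𝔤ⱼ] = 0. -/
/-- The centralizer of `b` is a subalgebra: if `b` commutes with `p`, then it commutes with
`p + [p, p]`. -/
lemma bracket_eq_zero_of_mem_sup {L : Type*} [LieRing L] [LieAlgebra ℝ L]
    {p : Submodule ℝ L} {b : L} (h : ∀ x ∈ p, ⁅x, b⁆ = 0) :
    ∀ a ∈ p ⊔ bracketSpan p p, ⁅a, b⁆ = 0 := by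
  have hle : p ⊔ bracketSpan p p ≤ LinearMap.ker (LieAlgebra.ad ℝ L b : L →ₗ[ℝ] L) := by
    refine sup_le (fun x hx => ?_) (Submodule.span_le.2 ?_)
    · rw [LinearMap.mem_ker, LieAlgebra.ad_apply, ← lie_skew, h x hx, neg_zero]
    · rintro _ ⟨x, hx, y, hy, rfl⟩
      rw [SetLike.mem_coe, LinearMap.mem_ker, LieAlgebra.ad_apply, ← lie_skew, lie_lie,
        h x hx, h y hy]
      simp
  intro a ha
  have := hle ha
  rw [LinearMap.mem_ker, LieAlgebra.ad_apply] at this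
  rw [← lie_skew, this, neg_zero]

lemma form_eq_zero_of_mem_sup {L : Type*} [LieRing L] [LieAlgebra ℝ L]
    (B : L →ₗ[ℝ] L →ₗ[ℝ] ℝ) (hinv : ∀ x y w : L, B ⁅x, y⁆ w = - B y ⁅x, w⁆)
    {p : Submodule ℝ L} {b : L} (h : ∀ x ∈ p, ⁅x, b⁆ = 0) (hB : ∀ x ∈ p, B x b = 0) :
    ∀ a ∈ p ⊔ bracketSpan p p, B a b = 0 := by
  have hle : p ⊔ bracketSpan p p ≤ LinearMap.ker (B.flip b) := by
    refine sup_le (fun x hx => hB x hx) (Submodule.span_le.2 ?_)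
    rintro _ ⟨x, hx, y, hy, rfl⟩
    rw [SetLike.mem_coe, LinearMap.mem_ker, LinearMap.flip_apply, hinv, h x hx, map_zero, neg_zero]
  exact fun a ha => hle ha

theorem stmt2 {L : Type*} [LieRing L] [LieAlgebra ℝ L] [FiniteDimensional ℝ L]
    -- an ad-invariant inner product on the Lie algebra `L`
    (B : L →ₗ[ℝ] L →ₗ[ℝ] ℝ)
    (hsymm : ∀ x y : L, B x y = B y x)
    (hpos : ∀ x : L, x ≠ 0 → 0 < B x x)
    (hinv : ∀ x y w : L, B ⁅x, y⁆ w = - B y ⁅x, w⁆)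
    -- a Lie subalgebra `𝔥` and its orthogonal complement `𝔭`
    (H : LieSubalgebra ℝ L)
    (p : Submodule ℝ L)
    (hp : ∀ x : L, x ∈ p ↔ ∀ y ∈ H, B x y = 0)
    -- the decomposition `𝔭 = 𝔭₁ ⊕ ⋯ ⊕ 𝔭ₖ`
    (k : ℕ) (P : Fin k → Submodule ℝ L)
    (hPsum : (⨆ i, P i) = p)
    (hPinvar : ∀ i, ∀ h ∈ H, ∀ x ∈ P i, ⁅h, x⁆ ∈ P i)
    (hPne : ∀ i, P i ≠ ⊥)
    (hPirr : ∀ i, ∀ q : Submodule ℝ L, q ≤ P i →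
      (∀ h ∈ H, ∀ x ∈ q, ⁅h, x⁆ ∈ q) → q = ⊥ ∨ q = P i)
    (hPorth : ∀ i j, i ≠ j → ∀ x ∈ P i, ∀ y ∈ P j, B x y = 0)
    (hPbr : ∀ i j, i ≠ j → ∀ x ∈ P i, ∀ y ∈ P j, ⁅x, y⁆ = 0)
    -- the subspaces `𝔥ᵢ = (𝔭ᵢ + [𝔭ᵢ,𝔭ᵢ]) ∩ 𝔥` and `𝔤ᵢ = 𝔥ᵢ + 𝔭ᵢ`
    (Hs : Fin k → Submodule ℝ L)
    (hHs : ∀ i, Hs i = (P i ⊔ bracketSpan (P i) (P i)) ⊓ H.toSubmodule)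
    (G : Fin k → Submodule ℝ L)
    (hG : ∀ i, G i = Hs i ⊔ P i)
    :
    ∀ i j, i ≠ j →
      (∀ x ∈ G i, ∀ y ∈ G j, B x y = 0) ∧ (∀ x ∈ G i, ∀ y ∈ G j, ⁅x, y⁆ = 0) := by
  intro i j hij
  have hGle : ∀ i, G i ≤ P i ⊔ bracketSpan (P i) (P i) := fun i => by
    rw [hG, hHs]
    exact sup_le inf_le_left le_sup_left
  have hbr : ∀ x ∈ P i, ∀ b ∈ P j ⊔ bracketSpan (P j) (P j), ⁅x, b⁆ = 0 := fun x hx b hb => by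
    rw [← lie_skew, bracket_eq_zero_of_mem_sup (fun y hy => hPbr j i hij.symm y hy x hx) b hb,
      neg_zero]
  refine ⟨fun x hx y hy => ?_, fun x hx y hy => ?_⟩
  · refine form_eq_zero_of_mem_sup B hinv (fun x hx => hbr x hx y (hGle j hy))
      (fun x hx => ?_) x (hGle i hx)
    rw [hsymm]
    exact form_eq_zero_of_mem_sup B hinv (fun z hz => hPbr j i hij.symm z hz x hx)
      (fun z hz => hPorth j i hij.symm z hz x hx) y (hGle j hy)
  · exact bracket_eq_zero_of_mem_sup (fun x hx => hbr x hx y (hGle j hy)) x (hGle i hx)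
end

section
/- Under the stated hypotheses, every pair (𝔤ᵢ,𝔥ᵢ) is effective and isotropy irreducible; that is, 𝔥ᵢ contains no nonzero ideal of the Lie algebra 𝔤ᵢ, and 𝔭ᵢ has no ad(𝔥ᵢ)-invariant subspaces other than 0 and 𝔭ᵢ. -/
/-- Orthogonal decomposition along a subspace, for a positive definite symmetric form. -/
lemma exists_orth_decomp {L : Type*} [AddCommGroup L] [Module ℝ L] [FiniteDimensional ℝ L]
    (B : L →ₗ[ℝ] L →ₗ[ℝ] ℝ) (hsymm : ∀ x y : L, B x y = B y x)
    (hpos : ∀ x : L, x ≠ 0 → 0 < B x x) (W : Submodule ℝ L) (x : L) :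
    ∃ a ∈ W, ∃ b : L, (∀ w ∈ W, B b w = 0) ∧ x = a + b := by
  have hrefl : LinearMap.IsRefl B := fun x y h => by rw [hsymm]; exact h
  have hnd : (LinearMap.BilinForm.restrict B W).Nondegenerate := by
    have key : ∀ m : W, B m m = 0 → m = 0 := fun m hm => by
      by_contra hne
      exact (hpos m (by simpa using hne)).ne' hm
    exact ⟨fun m hm => key m (hm m), fun m hm => key m (hm m)⟩
  have hc := LinearMap.BilinForm.isCompl_orthogonal_of_restrict_nondegenerate hrefl hnd
  have hx : x ∈ W ⊔ LinearMap.BilinForm.orthogonal B W := by rw [hc.sup_eq_top]; trivial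
  obtain ⟨a, ha, b, hb, rfl⟩ := Submodule.mem_sup.1 hx
  exact ⟨a, ha, b, fun w hw => by rw [hsymm]; exact hb w hw, rfl⟩

theorem stmt3 {L : Type*} [LieRing L] [LieAlgebra ℝ L] [FiniteDimensional ℝ L]
    -- an ad-invariant inner product on the Lie algebra `L`
    (B : L →ₗ[ℝ] L →ₗ[ℝ] ℝ)
    (hsymm : ∀ x y : L, B x y = B y x)
    (hpos : ∀ x : L, x ≠ 0 → 0 < B x x)
    (hinv : ∀ x y w : L, B ⁅x, y⁆ w = - B y ⁅x, w⁆)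
    -- a Lie subalgebra `𝔥` and its orthogonal complement `𝔭`
    (H : LieSubalgebra ℝ L)
    (p : Submodule ℝ L)
    (hp : ∀ x : L, x ∈ p ↔ ∀ y ∈ H, B x y = 0)
    -- the decomposition `𝔭 = 𝔭₁ ⊕ ⋯ ⊕ 𝔭ₖ`
    (k : ℕ) (P : Fin k → Submodule ℝ L)
    (hPsum : (⨆ i, P i) = p)
    (hPinvar : ∀ i, ∀ h ∈ H, ∀ x ∈ P i, ⁅h, x⁆ ∈ P i)
    (hPne : ∀ i, P i ≠ ⊥)
    (hPirr : ∀ i, ∀ q : Submodule ℝ L, q ≤ P i →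
      (∀ h ∈ H, ∀ x ∈ q, ⁅h, x⁆ ∈ q) → q = ⊥ ∨ q = P i)
    (hPorth : ∀ i j, i ≠ j → ∀ x ∈ P i, ∀ y ∈ P j, B x y = 0)
    (hPbr : ∀ i j, i ≠ j → ∀ x ∈ P i, ∀ y ∈ P j, ⁅x, y⁆ = 0)
    -- the subspaces `𝔥ᵢ = (𝔭ᵢ + [𝔭ᵢ,𝔭ᵢ]) ∩ 𝔥` and `𝔤ᵢ = 𝔥ᵢ + 𝔭ᵢ`
    (Hs : Fin k → Submodule ℝ L)
    (hHs : ∀ i, Hs i = (P i ⊔ bracketSpan (P i) (P i)) ⊓ H.toSubmodule)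
    (G : Fin k → Submodule ℝ L)
    (hG : ∀ i, G i = Hs i ⊔ P i)
    :
    ∀ i,
      (∀ I : Submodule ℝ L, I ≤ Hs i → (∀ x ∈ G i, ∀ y ∈ I, ⁅x, y⁆ ∈ I) → I = ⊥) ∧
      (∀ q : Submodule ℝ L, q ≤ P i →
        (∀ h ∈ Hs i, ∀ x ∈ q, ⁅h, x⁆ ∈ q) → q = ⊥ ∨ q = P i) := by
  have hz : ∀ x : L, B x x = 0 → x = 0 := fun x hx => by
    by_contra hne
    exact (hpos x hne).ne' hx
  have hPp : ∀ i, P i ≤ p := fun i => hPsum ▸ le_iSup P i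
  have hHP : ∀ i, ∀ x ∈ P i, ∀ h ∈ H, B x h = 0 := fun i x hx => (hp x).1 (hPp i hx)
  intro i
  constructor
  · intro I hI hIid
    -- `[𝔭ᵢ, I]` lies in `I ⊆ 𝔥` and in `𝔭ᵢ`, so it vanishes
    have hcomm : ∀ x ∈ P i, ∀ z ∈ I, ⁅x, z⁆ = 0 := by
      intro x hx z hzI
      have hzH : ∀ z ∈ I, z ∈ H := fun z hzI => by
        have := hI hzI
        rw [hHs] at this
        exact this.2
      have h1 := hzH _ (hIid x (by rw [hG]; exact Submodule.mem_sup_right hx) z hzI)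
      have h2 : ⁅x, z⁆ ∈ P i := by
        rw [← lie_skew]
        exact (P i).neg_mem (hPinvar i z (hzH z hzI) x hx)
      exact hz _ (hHP i _ h2 _ h1)
    rw [Submodule.eq_bot_iff]
    intro z hzI
    have hzHs := hI hzI
    rw [hHs] at hzHs
    have hle : P i ⊔ bracketSpan (P i) (P i) ≤ LinearMap.ker (B z) := by
      refine sup_le (fun x hx => ?_) (Submodule.span_le.2 ?_)
      · rw [LinearMap.mem_ker, hsymm]
        exact hHP i x hx z hzHs.2
      · rintro _ ⟨x, hx, y, -, rfl⟩
        have := hinv x z y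
        rw [hcomm x hx z hzI] at this
        simpa using this
    exact hz z (hle hzHs.1)
  · -- the bracket of two elements of `𝔭ᵢ` has its components in `𝔭ᵢ` and `𝔥ᵢ` only
    have hbr : ∀ x ∈ P i, ∀ y ∈ P i, ∃ a ∈ P i, ∃ b ∈ Hs i, ⁅x, y⁆ = a + b := by
      intro x hx y hy
      obtain ⟨a, ha, b, hb, hab⟩ := exists_orth_decomp B hsymm hpos (P i) ⁅x, y⁆
      refine ⟨a, ha, b, ?_, hab⟩
      have hb' : b = ⁅x, y⁆ - a := by rw [hab]; abel
      have hbp : p ≤ LinearMap.ker (B b) := by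
        rw [← hPsum]
        refine iSup_le fun j w hw => ?_
        rw [LinearMap.mem_ker]
        by_cases hij : i = j
        · subst hij
          exact hb w hw
        · rw [hb', map_sub, LinearMap.sub_apply, hinv, hPbr i j hij x hx w hw,
            hPorth i j hij a ha w hw]
          simp
      -- `b ⊥ 𝔭` forces `b ∈ 𝔥`, because `𝔤 = 𝔥 ⊕ 𝔭`
      have hbH : b ∈ H := by
        obtain ⟨h, hh, c, hc, hbc⟩ := exists_orth_decomp B hsymm hpos H.toSubmodule b
        have h1 : B b c = 0 := hbp ((hp c).2 hc)
        have h2 : B c h = 0 := hc h hh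
        have h3 : c = 0 := by
          apply hz
          rw [hbc, map_add, LinearMap.add_apply, hsymm h c, h2, zero_add] at h1
          exact h1
        rw [hbc, h3, add_zero]
        exact hh
      rw [hHs]
      refine ⟨?_, hbH⟩
      rw [hb']
      exact Submodule.sub_mem _
        (Submodule.mem_sup_right (Submodule.subset_span ⟨x, hx, y, hy, rfl⟩))
        (Submodule.mem_sup_left ha)
    intro q hq hqinv
    refine hPirr i q hq fun h hh x hx => ?_
    obtain ⟨a, ha, z, hzo, rfl⟩ := exists_orth_decomp B hsymm hpos (Hs i) h
    have haH : a ∈ H := by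
      rw [hHs] at ha
      exact ha.2
    have hzH : z ∈ H := by
      have := H.sub_mem hh haH
      rwa [add_sub_cancel_left] at this
    have hzx : ⁅z, x⁆ = 0 := by
      have hy := hPinvar i z hzH x (hq hx)
      obtain ⟨u, hu, v, hv, huv⟩ := hbr x (hq hx) _ hy
      apply hz
      have h1 : B ⁅z, x⁆ ⁅z, x⁆ = B z ⁅x, ⁅z, x⁆⁆ := by
        have := hinv x z ⁅z, x⁆
        rw [← lie_skew, map_neg, LinearMap.neg_apply] at this
        linarith
      rw [h1, huv, map_add, hsymm z u, hHP i u hu z hzH, hzo v hv, add_zero]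
    rw [add_lie, hzx, add_zero]
    exact hqinv a ha x hx
end

section
/- Let 𝔤 be a finite-dimensional real Lie algebra with an ad-invariant inner product ⟨·,·⟩, let Z, W ∈ 𝔤 with [Z,W] = 0, let λ be a nonzero real number, and let 𝔭 ⊆ 𝔤 be a linear subspace such that [Z,𝔭] ⊆ 𝔭, [W,𝔭] ⊆ 𝔭, and [Z,[Z,X]] = −λ²·X for every X ∈ 𝔭. If ⟨W,[X,[Z,X]]⟩ = 0 for every X ∈ 𝔭, then [W,X] = 0 for every X ∈ 𝔭. -/
/-!
Write `A = ad W` and `J = ad Z`. By ad-invariance `⟨W, [X, [Z, Y]]⟩ = ⟨A X, J Y⟩`. Both operators are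
skew and they commute, since `[Z, W] = 0`, so `(X, Y) ↦ ⟨A X, J Y⟩` is a symmetric bilinear form.
Its quadratic form vanishes on `𝔭` by hypothesis, hence by polarization so does the form itself.
Taking `Y = J (A X) ∈ 𝔭`, where `J Y = -λ² A X`, gives `λ² ⟨A X, A X⟩ = 0`, and so `A X = 0` by
positive definiteness.
-/

/-- Let `𝔤` be a finite-dimensional real Lie algebra with an ad-invariant inner product `B`,
`Z, W ∈ 𝔤` commuting elements, `λ ≠ 0`, and `𝔭 ⊆ 𝔤` a subspace invariant under `ad Z` and
`ad W` on which `(ad Z)² = -λ²·Id`.  If `⟨W, [X,[Z,X]]⟩ = 0` for every `X ∈ 𝔭`, then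
`[W,X] = 0` for every `X ∈ 𝔭`. -/
theorem stmt7 {L : Type*} [LieRing L] [LieAlgebra ℝ L] [FiniteDimensional ℝ L]
    (B : L →ₗ[ℝ] L →ₗ[ℝ] ℝ)
    (hsymm : ∀ x y : L, B x y = B y x)
    (hpos : ∀ x : L, x ≠ 0 → 0 < B x x)
    (hinv : ∀ x y w : L, B ⁅x, y⁆ w = - B y ⁅x, w⁆)
    (Z W : L) (hZW : ⁅Z, W⁆ = 0)
    (lam : ℝ) (hlam : lam ≠ 0)
    (p : Submodule ℝ L)
    (hZp : ∀ x ∈ p, ⁅Z, x⁆ ∈ p)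
    (hWp : ∀ x ∈ p, ⁅W, x⁆ ∈ p)
    (heig : ∀ x ∈ p, ⁅Z, ⁅Z, x⁆⁆ = (-(lam ^ 2)) • x)
    (horth : ∀ x ∈ p, B W ⁅x, ⁅Z, x⁆⁆ = 0) :
    ∀ x ∈ p, ⁅W, x⁆ = 0 := by
  have key : ∀ x y : L, B W ⁅x, ⁅Z, y⁆⁆ = B ⁅W, x⁆ ⁅Z, y⁆ := by
    intro x y
    have h := hinv x W ⁅Z, y⁆
    rw [← lie_skew x W, map_neg, LinearMap.neg_apply] at h
    linarith
  have hcomm : ∀ x : L, ⁅W, ⁅Z, x⁆⁆ = ⁅Z, ⁅W, x⁆⁆ := by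
    intro x
    rw [leibniz_lie Z W x, hZW, zero_lie, zero_add]
  have hsym : ∀ x y : L, B ⁅W, y⁆ ⁅Z, x⁆ = B ⁅W, x⁆ ⁅Z, y⁆ := by
    intro x y
    rw [hinv W y, hcomm, ← hinv Z y, hsymm]
  have hzero : ∀ x ∈ p, ∀ y ∈ p, B ⁅W, x⁆ ⁅Z, y⁆ = 0 := by
    intro x hx y hy
    have h := horth (x + y) (p.add_mem hx hy)
    have h1 := horth x hx
    have h2 := horth y hy
    rw [key] at h h1 h2
    simp only [lie_add, map_add, LinearMap.add_apply] at h
    have h3 := hsym x y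
    linarith
  intro x hx
  by_contra hne
  have hA := hWp x hx
  have h := hzero x hx _ (hZp _ hA)
  rw [heig _ hA, map_smul, smul_eq_mul] at h
  have hl : 0 < lam ^ 2 := by positivity
  nlinarith [mul_pos hl (hpos _ hne)]
end

section
/- Let V be a finite-dimensional real inner product space and let P, Q : V → V be skew-adjoint linear operators such that P∘Q = Q∘P and Q² = −λ²·Id for some nonzero real number λ. If ⟨P(Q(u)), u⟩ = 0 for every u ∈ V, then P = 0. -/
open RealInnerProductSpace

/-- If `P, Q` are commuting skew-adjoint operators on a finite-dimensional real inner product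
space with `Q² = -λ²·Id` for some `λ ≠ 0`, and `⟨P(Q(u)), u⟩ = 0` for all `u`, then `P = 0`. -/
theorem stmt8 {V : Type*} [NormedAddCommGroup V] [InnerProductSpace ℝ V]
    [FiniteDimensional ℝ V]
    (P Q : V →ₗ[ℝ] V) (lam : ℝ) (hlam : lam ≠ 0)
    (hP : ∀ u v : V, ⟪P u, v⟫ = -⟪u, P v⟫)
    (hQ : ∀ u v : V, ⟪Q u, v⟫ = -⟪u, Q v⟫)
    (hcomm : P ∘ₗ Q = Q ∘ₗ P)
    (hQ2 : Q ∘ₗ Q = (-(lam ^ 2)) • LinearMap.id)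
    (h : ∀ u : V, ⟪P (Q u), u⟫ = 0) :
    P = 0 := by
  -- `P ∘ Q` is symmetric because `P`, `Q` are commuting and skew-adjoint; a symmetric operator
  -- whose quadratic form vanishes is zero.
  have hsymm : (P ∘ₗ Q).IsSymmetric := fun u v => by
    rw [LinearMap.comp_apply, hP, hQ, neg_neg, hcomm, LinearMap.comp_apply]
  have hPQ : P ∘ₗ Q = 0 := hsymm.inner_map_self_eq_zero.mp h
  -- Composing `P ∘ Q = 0` with `Q` on the right recovers a nonzero multiple of `P`.
  have hscaled : (-(lam ^ 2)) • P = 0 := by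
    rw [← LinearMap.comp_id P, ← LinearMap.comp_smul, ← hQ2, ← LinearMap.comp_assoc, hPQ,
      LinearMap.zero_comp]
  exact (smul_eq_zero.mp hscaled).resolve_left (neg_ne_zero.mpr (pow_ne_zero 2 hlam))
end

section
/- Let 𝔤 be a finite-dimensional simple real Lie algebra that admits an ad-invariant inner product, and let Z ∈ 𝔤 with Z ≠ 0. Let B = im(ad Z) be the image of the adjoint operator ad Z. Then the subspace B + [B,B] (the linear span of B together with all brackets [X,Y] with X,Y ∈ B) equals 𝔤. -/
/-- If `ad Z` is skew for a definite form, then `𝔤` is the sum of its kernel and its image. -/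
lemma exists_ker_add_range {L : Type*} [LieRing L] [LieAlgebra ℝ L] [FiniteDimensional ℝ L]
    (B : L →ₗ[ℝ] L →ₗ[ℝ] ℝ)
    (hpos : ∀ x : L, x ≠ 0 → 0 < B x x)
    (hinv : ∀ x y w : L, B ⁅x, y⁆ w = - B y ⁅x, w⁆)
    (Z : L) (adZ : L →ₗ[ℝ] L) (hadZ : ∀ x : L, adZ x = ⁅Z, x⁆) (a : L) :
    ∃ k b : L, ⁅Z, k⁆ = 0 ∧ b ∈ LinearMap.range adZ ∧ k + b = a := by
  have hdisj : Disjoint (LinearMap.ker adZ) (LinearMap.range adZ) := by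
    rw [Submodule.disjoint_def]
    rintro _ hx ⟨y, rfl⟩
    by_contra hne
    have h := hpos _ hne
    rw [LinearMap.mem_ker, hadZ (adZ y)] at hx
    nth_rewrite 1 [hadZ y] at h
    rw [hinv, hx] at h
    simp at h
  have htop : LinearMap.ker adZ ⊔ LinearMap.range adZ = ⊤ :=
    Submodule.eq_top_of_disjoint _ _
      (by rw [add_comm, LinearMap.finrank_range_add_finrank_ker]) hdisj
  obtain ⟨k, hk, b, hb, h⟩ := Submodule.mem_sup.1 (htop ▸ Submodule.mem_top : a ∈ _)
  exact ⟨k, b, by rw [← hadZ]; exact hk, hb, h⟩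

lemma eq_zero_of_forall_lie_eq_zero {L : Type*} [LieRing L] [LieAlgebra ℝ L]
    [LieAlgebra.IsSimple ℝ L] (Z : L) (h : ∀ x : L, ⁅Z, x⁆ = 0) : Z = 0 := by
  have hmem : Z ∈ LieAlgebra.center ℝ L := by
    rw [LieModule.mem_maxTrivSubmodule]
    intro x
    rw [← lie_skew, h, neg_zero]
  rw [LieAlgebra.center_eq_bot] at hmem
  simpa using hmem

lemma lie_mem_range_of_lie_eq_zero {L : Type*} [LieRing L] [LieAlgebra ℝ L]
    (Z : L) (adZ : L →ₗ[ℝ] L) (hadZ : ∀ x : L, adZ x = ⁅Z, x⁆) {k b : L}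
    (hk : ⁅Z, k⁆ = 0) (hb : b ∈ LinearMap.range adZ) : ⁅k, b⁆ ∈ LinearMap.range adZ := by
  obtain ⟨y, rfl⟩ := hb
  refine ⟨⁅k, y⁆, ?_⟩
  rw [hadZ, hadZ, leibniz_lie, hk, zero_lie, zero_add]

/-- If `𝔤 = im (ad Z) + ker (ad Z)`, then `im (ad Z) + [im (ad Z), im (ad Z)]` is an ideal. -/
lemma lie_mem_range_sup_bracketSpan {L : Type*} [LieRing L] [LieAlgebra ℝ L]
    (Z : L) (adZ : L →ₗ[ℝ] L) (hadZ : ∀ x : L, adZ x = ⁅Z, x⁆)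
    (hsplit : ∀ a : L, ∃ k b : L, ⁅Z, k⁆ = 0 ∧ b ∈ LinearMap.range adZ ∧ k + b = a) (a : L)
    {m : L}
    (hm : m ∈ LinearMap.range adZ ⊔ bracketSpan (LinearMap.range adZ) (LinearMap.range adZ)) :
    ⁅a, m⁆ ∈ LinearMap.range adZ ⊔ bracketSpan (LinearMap.range adZ) (LinearMap.range adZ) := by
  set R := LinearMap.range adZ
  have hkb : ∀ {k b : L}, ⁅Z, k⁆ = 0 → b ∈ R → ⁅k, b⁆ ∈ R :=
    fun hk hb => lie_mem_range_of_lie_eq_zero Z adZ hadZ hk hb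
  have hRW : ∀ {x : L}, x ∈ R → x ∈ R ⊔ bracketSpan R R := fun hx => Submodule.mem_sup_left hx
  have hbb : ∀ {x y : L}, x ∈ R → y ∈ R → ⁅x, y⁆ ∈ R ⊔ bracketSpan R R := fun {x y} hx hy =>
    Submodule.mem_sup_right (Submodule.subset_span ⟨x, hx, y, hy, rfl⟩)
  have haR : ∀ {x : L}, x ∈ R → ⁅a, x⁆ ∈ R ⊔ bracketSpan R R := by
    intro x hx
    obtain ⟨k, b, hk, hb, rfl⟩ := hsplit a
    rw [add_lie]
    exact add_mem (hRW (hkb hk hx)) (hbb hb hx)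
  obtain ⟨r, hr, s, hs, rfl⟩ := Submodule.mem_sup.1 hm
  rw [lie_add]
  refine add_mem (haR hr) ?_
  clear hm
  unfold bracketSpan at hs
  induction hs using Submodule.span_induction with
  | zero => simp
  | add u v hu hv ihu ihv =>
    rw [lie_add]
    exact add_mem ihu ihv
  | smul c u hu ih =>
    rw [lie_smul]
    exact Submodule.smul_mem _ c ih
  | mem u hu =>
    obtain ⟨x, hx, y, hy, rfl⟩ := hu
    obtain ⟨k, b, hk, hb, rfl⟩ := hsplit a
    rw [add_lie]
    refine add_mem ?_ ?_
    · rw [leibniz_lie]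
      exact add_mem (hbb (hkb hk hx) hy) (hbb hx (hkb hk hy))
    · obtain ⟨k', b', hk', hb', h⟩ := hsplit ⁅x, y⁆
      rw [← h, lie_add, ← lie_skew b k']
      exact add_mem (neg_mem (hRW (hkb hk' hb))) (hbb hb hb')

/-- If `𝔤` is a finite-dimensional simple real Lie algebra admitting an ad-invariant inner
product and `Z ≠ 0`, then for `B = im(ad Z)` one has `B + [B,B] = 𝔤`. -/
theorem stmt9 {L : Type*} [LieRing L] [LieAlgebra ℝ L] [FiniteDimensional ℝ L]
    [LieAlgebra.IsSimple ℝ L]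
    (B : L →ₗ[ℝ] L →ₗ[ℝ] ℝ)
    (hsymm : ∀ x y : L, B x y = B y x)
    (hpos : ∀ x : L, x ≠ 0 → 0 < B x x)
    (hinv : ∀ x y w : L, B ⁅x, y⁆ w = - B y ⁅x, w⁆)
    (Z : L) (hZ : Z ≠ 0)
    (adZ : L →ₗ[ℝ] L) (hadZ : ∀ x : L, adZ x = ⁅Z, x⁆) :
    LinearMap.range adZ ⊔ bracketSpan (LinearMap.range adZ) (LinearMap.range adZ) = ⊤ := by
  let I : LieIdeal ℝ L :=
    { LinearMap.range adZ ⊔ bracketSpan (LinearMap.range adZ) (LinearMap.range adZ) with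
      lie_mem := fun {a _} hm => lie_mem_range_sup_bracketSpan Z adZ hadZ
        (exists_ker_add_range B hpos hinv Z adZ hadZ) a hm }
  have hrange : ∀ x : L, ⁅Z, x⁆ ∈ I := fun x =>
    Submodule.mem_sup_left (show ⁅Z, x⁆ ∈ LinearMap.range adZ from ⟨x, hadZ x⟩)
  rcases LieAlgebra.IsSimple.eq_bot_or_eq_top (R := ℝ) I with h | h
  · refine absurd (eq_zero_of_forall_lie_eq_zero Z fun x => ?_) hZ
    have hx := hrange x
    rwa [h, LieSubmodule.mem_bot] at hx
  · exact congrArg LieSubmodule.toSubmodule h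
end

section
/- Let 𝔤 be a finite-dimensional simple real Lie algebra with an ad-invariant inner product ⟨·,·⟩, let 𝔨 be a Lie subalgebra of 𝔤, and let 𝔪 be the orthogonal complement of 𝔨 in 𝔤. Suppose 𝔪 = 𝔭₁ ⊕ ⋯ ⊕ 𝔭ₜ, where the subspaces 𝔭ᵢ are pairwise orthogonal, each 𝔭ᵢ is ad(𝔨)-invariant ([𝔨,𝔭ᵢ] ⊆ 𝔭ᵢ), and [𝔭ᵢ,𝔭ⱼ] = 0 for all i ≠ j. Then at most one of the subspaces 𝔭ᵢ is nonzero. -/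
/-!
Fix `i ≠ j` with `P i` and `P j` nonzero, and consider the subspace `I = P i + [P i, P i]`.

The complementary part `Q = ∑_{l ≠ i} P l` of `m` commutes with `P i`, hence with `I`, and `I` is
stable under `ad K` by the Jacobi identity.  By ad-invariance,
`B [a, b] q = -B b [a, q] = 0` for `a, b ∈ P i` and `q ∈ Q`, so `[P i, P i] ⊆ K + P i`
(`lie_mem_add`), which gives `[P i, [P i, P i]] ⊆ P i + [P i, P i]`.  Since `L = K + P i + Q`, the
subspace `I` is an ideal, and simplicity forces `I = L`.  As `P j ⊆ Q` commutes with `I`, it lies in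
the center of `L`, which is zero: a contradiction.
-/

/-- A subspace `W` and its orthogonal complement for a positive definite symmetric form span the
whole space. -/
lemma exists_add_orthogonal {V : Type*} [AddCommGroup V] [Module ℝ V] [FiniteDimensional ℝ V]
    (B : V →ₗ[ℝ] V →ₗ[ℝ] ℝ) (hsymm : ∀ x y, B x y = B y x) (hpos : ∀ x, x ≠ 0 → 0 < B x x)
    (W : Submodule ℝ V) (y : V) : ∃ k ∈ W, ∃ u, (∀ w ∈ W, B u w = 0) ∧ y = k + u := by
  have hrefl : LinearMap.BilinForm.IsRefl B := fun x y h => by rw [hsymm, h]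
  have hc : IsCompl W (LinearMap.BilinForm.orthogonal B W) := by
    refine (LinearMap.BilinForm.isCompl_orthogonal_iff_disjoint hrefl).2 ?_
    rw [Submodule.disjoint_def]
    intro x hx hx'
    by_contra h0
    exact (hpos x h0).ne' (hx' x hx)
  have hy : y ∈ W ⊔ LinearMap.BilinForm.orthogonal B W := by
    rw [hc.sup_eq_top]; trivial
  obtain ⟨k, hk, u, hu, rfl⟩ := Submodule.mem_sup.1 hy
  exact ⟨k, hk, u, fun w hw => by rw [hsymm]; exact hu w hw, rfl⟩

/-- If `L = K + p + Q` with `Q` orthogonal to `K` and `p`, and `[p, Q] = 0`, then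
`[p, p] ⊆ K + p`. -/
lemma lie_mem_add {L : Type*} [LieRing L] [LieAlgebra ℝ L]
    (B : L →ₗ[ℝ] L →ₗ[ℝ] ℝ) (hpos : ∀ x : L, x ≠ 0 → 0 < B x x)
    (hinv : ∀ x y w : L, B ⁅x, y⁆ w = - B y ⁅x, w⁆) (K : LieSubalgebra ℝ L)
    (p Q : Submodule ℝ L)
    (hdec : ∀ y : L, ∃ k ∈ K, ∃ x ∈ p, ∃ q ∈ Q, y = k + x + q)
    (hKQ : ∀ k ∈ K, ∀ q ∈ Q, B k q = 0) (hpQ : ∀ x ∈ p, ∀ q ∈ Q, B x q = 0)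
    (hbr : ∀ x ∈ p, ∀ q ∈ Q, ⁅x, q⁆ = 0) (a b : L) (ha : a ∈ p) :
    ∃ k ∈ K, ∃ x ∈ p, ⁅a, b⁆ = k + x := by
  obtain ⟨k, hk, x, hx, q, hq, h⟩ := hdec ⁅a, b⁆
  refine ⟨k, hk, x, hx, ?_⟩
  have h1 : B ⁅a, b⁆ q = 0 := by rw [hinv, hbr a ha q hq]; simp
  rw [h, map_add, map_add, LinearMap.add_apply, LinearMap.add_apply, hKQ k hk q hq,
    hpQ x hx q hq, zero_add, zero_add] at h1
  have hq0 : q = 0 := by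
    by_contra h0
    exact (hpos q h0).ne' h1
  rw [h, hq0, add_zero]

/-- The subspace `p + [p, p]` of a Lie algebra. -/
def addBracket {L : Type*} [LieRing L] [LieAlgebra ℝ L] (p : Submodule ℝ L) : Submodule ℝ L :=
  p ⊔ Submodule.span ℝ {z | ∃ a ∈ p, ∃ b ∈ p, z = ⁅a, b⁆}

lemma mem_addBracket {L : Type*} [LieRing L] [LieAlgebra ℝ L] {p : Submodule ℝ L} {x : L}
    (hx : x ∈ p) : x ∈ addBracket p :=
  (le_sup_left : p ≤ addBracket p) hx

lemma lie_mem_addBracket {L : Type*} [LieRing L] [LieAlgebra ℝ L] {p : Submodule ℝ L} {a b : L}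
    (ha : a ∈ p) (hb : b ∈ p) : ⁅a, b⁆ ∈ addBracket p :=
  (le_sup_right : _ ≤ addBracket p) (Submodule.subset_span ⟨a, ha, b, hb, rfl⟩)

/-- To check that `ad y` maps `p + [p, p]` into a subspace, it suffices to check generators. -/
lemma lie_mem_of_mem_addBracket {L : Type*} [LieRing L] [LieAlgebra ℝ L] {p : Submodule ℝ L}
    (N : Submodule ℝ L) (y : L) (h1 : ∀ x ∈ p, ⁅y, x⁆ ∈ N)
    (h2 : ∀ a ∈ p, ∀ b ∈ p, ⁅y, ⁅a, b⁆⁆ ∈ N) {z : L} (hz : z ∈ addBracket p) : ⁅y, z⁆ ∈ N := by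
  have hle : addBracket p ≤ N.comap (LieAlgebra.ad ℝ L y : L →ₗ[ℝ] L) := by
    refine sup_le (fun x hx => h1 x hx) (Submodule.span_le.2 ?_)
    rintro _ ⟨a, ha, b, hb, rfl⟩
    exact h2 a ha b hb
  exact hle hz

/-- Let `𝔤` be a finite-dimensional simple real Lie algebra with an ad-invariant inner
product, `𝔨` a Lie subalgebra with orthogonal complement `𝔪`, and suppose
`𝔪 = 𝔭₁ ⊕ ⋯ ⊕ 𝔭ₜ` with the `𝔭ᵢ` pairwise orthogonal, `ad(𝔨)`-invariant, and
`[𝔭ᵢ,𝔭ⱼ] = 0` for `i ≠ j`.  Then at most one of the subspaces `𝔭ᵢ` is nonzero. -/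
theorem stmt10 {L : Type*} [LieRing L] [LieAlgebra ℝ L] [FiniteDimensional ℝ L]
    [LieAlgebra.IsSimple ℝ L]
    (B : L →ₗ[ℝ] L →ₗ[ℝ] ℝ)
    (hsymm : ∀ x y : L, B x y = B y x)
    (hpos : ∀ x : L, x ≠ 0 → 0 < B x x)
    (hinv : ∀ x y w : L, B ⁅x, y⁆ w = - B y ⁅x, w⁆)
    (K : LieSubalgebra ℝ L)
    (m : Submodule ℝ L)
    (hm : ∀ x : L, x ∈ m ↔ ∀ y ∈ K, B x y = 0)
    (t : ℕ) (P : Fin t → Submodule ℝ L)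
    (hPsum : (⨆ i, P i) = m)
    (hPorth : ∀ i j, i ≠ j → ∀ x ∈ P i, ∀ y ∈ P j, B x y = 0)
    (hPinvar : ∀ i, ∀ h ∈ K, ∀ x ∈ P i, ⁅h, x⁆ ∈ P i)
    (hPbr : ∀ i j, i ≠ j → ∀ x ∈ P i, ∀ y ∈ P j, ⁅x, y⁆ = 0) :
    ∀ i j, P i ≠ ⊥ → P j ≠ ⊥ → i = j := by
  intro i j hi hj
  by_contra hij
  let Q : Submodule ℝ L := ⨆ l, ⨆ _ : l ≠ i, P l
  have hPm : ∀ l, P l ≤ m := fun l => hPsum ▸ le_iSup P l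
  have hQm : Q ≤ m := iSup_le fun l => iSup_le fun _ => hPm l
  have hPjQ : P j ≤ Q := le_iSup₂_of_le (f := fun l (_ : l ≠ i) => P l) j (Ne.symm hij) le_rfl
  have hmQ : m ≤ P i ⊔ Q := by
    rw [← hPsum]
    refine iSup_le fun l => ?_
    by_cases h : l = i
    · exact h ▸ le_sup_left
    · exact le_sup_of_le_right (le_iSup₂_of_le (f := fun l (_ : l ≠ i) => P l) l h le_rfl)
  have hKQ : ∀ k ∈ K, ∀ q ∈ Q, B k q = 0 := fun k hk q hq => by
    rw [hsymm]; exact (hm q).1 (hQm hq) k hk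
  have hpQ : ∀ x ∈ P i, ∀ q ∈ Q, B x q = 0 := fun x hx q hq => by
    have : Q ≤ LinearMap.ker (B x) :=
      iSup_le fun l => iSup_le fun hl => fun y hy => hPorth i l (Ne.symm hl) x hx y hy
    exact this hq
  have hbr : ∀ x ∈ P i, ∀ q ∈ Q, ⁅x, q⁆ = 0 := fun x hx q hq => by
    have : Q ≤ LinearMap.ker (LieAlgebra.ad ℝ L x : L →ₗ[ℝ] L) :=
      iSup_le fun l => iSup_le fun hl => fun y hy => hPbr i l (Ne.symm hl) x hx y hy
    exact this hq
  have hbr' : ∀ q ∈ Q, ∀ x ∈ P i, ⁅q, x⁆ = 0 := fun q hq x hx => by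
    rw [← lie_skew, hbr x hx q hq, neg_zero]
  have hdec : ∀ y : L, ∃ k ∈ K, ∃ x ∈ P i, ∃ q ∈ Q, y = k + x + q := fun y => by
    obtain ⟨k, hk, u, hu, rfl⟩ := exists_add_orthogonal B hsymm hpos K.toSubmodule y
    obtain ⟨x, hx, q, hq, rfl⟩ := Submodule.mem_sup.1 (hmQ ((hm u).2 hu))
    exact ⟨k, hk, x, hx, q, hq, by rw [add_assoc]⟩
  have hQI : ∀ q ∈ Q, ∀ z ∈ addBracket (P i), ⁅q, z⁆ = 0 := fun q hq z hz =>
    (Submodule.mem_bot ℝ).1 <| lie_mem_of_mem_addBracket ⊥ q (fun x hx => hbr' q hq x hx)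
      (fun a ha b hb => by
        rw [leibniz_lie, hbr' q hq a ha, hbr' q hq b hb, zero_lie, lie_zero, add_zero]
        exact Submodule.zero_mem _) hz
  have hKI : ∀ k ∈ K, ∀ z ∈ addBracket (P i), ⁅k, z⁆ ∈ addBracket (P i) := fun k hk z hz =>
    lie_mem_of_mem_addBracket _ k (fun x hx => mem_addBracket (hPinvar i k hk x hx))
      (fun a ha b hb => by
        rw [leibniz_lie]
        exact add_mem (lie_mem_addBracket (hPinvar i k hk a ha) hb)
          (lie_mem_addBracket ha (hPinvar i k hk b hb))) hz
  have hpI : ∀ x ∈ P i, ∀ z ∈ addBracket (P i), ⁅x, z⁆ ∈ addBracket (P i) := fun x hx z hz =>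
    lie_mem_of_mem_addBracket _ x (fun y hy => lie_mem_addBracket hx hy)
      (fun a ha b hb => by
        obtain ⟨k, hk, y, hy, h⟩ := lie_mem_add B hpos hinv K (P i) Q hdec hKQ hpQ hbr a b ha
        rw [h, lie_add, ← lie_skew x k]
        exact add_mem (neg_mem (mem_addBracket (hPinvar i k hk x hx)))
          (lie_mem_addBracket hx hy)) hz
  let I : LieIdeal ℝ L :=
    { addBracket (P i) with
      lie_mem := fun {y z} hz => by
        obtain ⟨k, hk, x, hx, q, hq, rfl⟩ := hdec y
        change ⁅k + x + q, z⁆ ∈ addBracket (P i)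
        rw [add_lie, add_lie, hQI q hq z hz, add_zero]
        exact add_mem (hKI k hk z hz) (hpI x hx z hz) }
  obtain ⟨x, hx, hx0⟩ := Submodule.exists_mem_ne_zero_of_ne_bot hi
  obtain ⟨z, hz, hz0⟩ := Submodule.exists_mem_ne_zero_of_ne_bot hj
  have hxI : x ∈ I := mem_addBracket hx
  rcases LieAlgebra.IsSimple.eq_bot_or_eq_top I with h | h
  · rw [h] at hxI
    exact hx0 ((LieSubmodule.mem_bot x).1 hxI)
  · have hzc : z ∈ LieAlgebra.center ℝ L := by
      rw [LieModule.mem_maxTrivSubmodule]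
      intro y
      have hy : y ∈ I := h ▸ LieSubmodule.mem_top y
      rw [← lie_skew, hQI z (hPjQ hz) y hy, neg_zero]
    rw [LieAlgebra.center_eq_bot] at hzc
    exact hz0 ((LieSubmodule.mem_bot z).1 hzc)
end

section
/- Let 𝔤 be a finite-dimensional real Lie algebra with an ad-invariant inner product ⟨·,·⟩, let Z ∈ 𝔤, let 𝔨 = {X ∈ 𝔤 : [Z,X] = 0} be the centralizer of Z, and let 𝔪 be the orthogonal complement of 𝔨 in 𝔤. Suppose there is a nonzero real number λ such that [Z,[Z,X]] = −λ²·X for every X ∈ 𝔪. Then [𝔪,𝔪] ⊆ 𝔨; consequently 𝔤 = 𝔨 ⊕ 𝔪 is a symmetric decomposition, i.e. [𝔨,𝔨] ⊆ 𝔨, [𝔨,𝔪] ⊆ 𝔪, and [𝔪,𝔪] ⊆ 𝔨. -/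
/-!
Write `D = ad Z`. For `x, y ∈ 𝔪` put `u = [x, y]`. As `D` is a derivation with `D² = -λ²` on `𝔪`,
expanding gives `D³ u = -4λ² D u`: complexified, `[x, y]` only involves the eigenvalues `0, ±2iλ`
of `D`. On the other hand `D` is skew-adjoint, so its image is orthogonal to its kernel `𝔨`; hence
`D u ∈ 𝔪` and `D³ u = -λ² D u`. Comparing, `3λ² D u = 0`, so `u ∈ 𝔨`. The other two inclusions are
the Jacobi identity and the ad-invariance of the inner product.
-/

/-- If `(ad Z)²` acts on `x` and `y` as the scalar `c`, then `(ad Z)³ [x, y] = 4c (ad Z) [x, y]`. -/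
lemma lie_lie_lie_bracket {L : Type*} [LieRing L] [LieAlgebra ℝ L] {Z x y : L} {c : ℝ}
    (hx : ⁅Z, ⁅Z, x⁆⁆ = c • x) (hy : ⁅Z, ⁅Z, y⁆⁆ = c • y) :
    ⁅Z, ⁅Z, ⁅Z, ⁅x, y⁆⁆⁆⁆ = (4 * c) • ⁅Z, ⁅x, y⁆⁆ := by
  have h1 : ⁅Z, ⁅x, y⁆⁆ = ⁅⁅Z, x⁆, y⁆ + ⁅x, ⁅Z, y⁆⁆ := leibniz_lie _ _ _
  have h2 : ⁅Z, ⁅⁅Z, x⁆, y⁆⁆ = c • ⁅x, y⁆ + ⁅⁅Z, x⁆, ⁅Z, y⁆⁆ := by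
    rw [leibniz_lie, hx, smul_lie]
  have h3 : ⁅Z, ⁅x, ⁅Z, y⁆⁆⁆ = ⁅⁅Z, x⁆, ⁅Z, y⁆⁆ + c • ⁅x, y⁆ := by
    rw [leibniz_lie, hy, lie_smul]
  have h4 : ⁅Z, ⁅⁅Z, x⁆, ⁅Z, y⁆⁆⁆ = c • ⁅x, ⁅Z, y⁆⁆ + c • ⁅⁅Z, x⁆, y⁆ := by
    rw [leibniz_lie, hx, hy, smul_lie, lie_smul]
  rw [h1, lie_add, h2, h3]
  simp only [lie_add, lie_smul, h4, h1]
  module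

/-- Let `𝔤` be a finite-dimensional real Lie algebra with an ad-invariant inner product,
`Z ∈ 𝔤`, `𝔨` the centralizer of `Z`, and `𝔪` the orthogonal complement of `𝔨`.  If
`(ad Z)² = -λ²·Id` on `𝔪` for some `λ ≠ 0`, then `[𝔪,𝔪] ⊆ 𝔨`; consequently
`𝔤 = 𝔨 ⊕ 𝔪` is a symmetric decomposition: `[𝔨,𝔨] ⊆ 𝔨`, `[𝔨,𝔪] ⊆ 𝔪`, `[𝔪,𝔪] ⊆ 𝔨`. -/
theorem stmt11 {L : Type*} [LieRing L] [LieAlgebra ℝ L] [FiniteDimensional ℝ L]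
    (B : L →ₗ[ℝ] L →ₗ[ℝ] ℝ)
    (hsymm : ∀ x y : L, B x y = B y x)
    (hpos : ∀ x : L, x ≠ 0 → 0 < B x x)
    (hinv : ∀ x y w : L, B ⁅x, y⁆ w = - B y ⁅x, w⁆)
    (Z : L)
    (K : Submodule ℝ L)
    (hK : ∀ x : L, x ∈ K ↔ ⁅Z, x⁆ = 0)
    (m : Submodule ℝ L)
    (hm : ∀ x : L, x ∈ m ↔ ∀ y ∈ K, B x y = 0)
    (lam : ℝ) (hlam : lam ≠ 0)
    (heig : ∀ x ∈ m, ⁅Z, ⁅Z, x⁆⁆ = (-(lam ^ 2)) • x) :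
    (∀ x ∈ m, ∀ y ∈ m, ⁅x, y⁆ ∈ K) ∧
    (∀ x ∈ K, ∀ y ∈ K, ⁅x, y⁆ ∈ K) ∧
    (∀ x ∈ K, ∀ y ∈ m, ⁅x, y⁆ ∈ m) := by
  refine ⟨fun x hx y hy => ?_, fun x hx y hy => ?_, fun x hx y hy => ?_⟩
  · have h4 := lie_lie_lie_bracket (heig x hx) (heig y hy)
    have hmem : ⁅Z, ⁅x, y⁆⁆ ∈ m := (hm _).2 fun w hw => by
      rw [hinv, (hK w).1 hw, map_zero, neg_zero]
    rw [heig _ hmem] at h4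
    have h3 : (3 * lam ^ 2) • ⁅Z, ⁅x, y⁆⁆ = 0 := by
      linear_combination (norm := module) h4
    exact (hK _).2 ((smul_eq_zero.1 h3).resolve_left (by positivity))
  · rw [hK, leibniz_lie, (hK x).1 hx, (hK y).1 hy, zero_lie, lie_zero, add_zero]
  · refine (hm _).2 fun w hw => ?_
    have hxw : ⁅x, w⁆ ∈ K := by
      rw [hK, leibniz_lie, (hK x).1 hx, (hK w).1 hw, zero_lie, lie_zero, add_zero]
    rw [hinv, (hm y).1 hy _ hxw, neg_zero]
end

section
/- Let V be a finite-dimensional real inner product space, let Π = {π₁,…,π_r} ⊂ V be a linearly independent finite set (the simple roots), and let Δ⁺ ⊂ V be a finite set (the positive roots) with Π ⊆ Δ⁺ such that every α ∈ Δ⁺ is a linear combination of π₁,…,π_r with nonnegative integer coefficients. Suppose β = a₁π₁ + ⋯ + a_rπ_r ∈ Δ⁺ is a maximal root, meaning that every coefficient aᵢ is an integer with aᵢ ≥ 1 and for every α ∈ Δ⁺ the difference β − α is a linear combination of π₁,…,π_r with nonnegative real coefficients. Let Z ∈ V satisfy ⟨Z,α⟩ ∈ {0,1} for every α ∈ Δ⁺,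 and suppose ⟨Z,α₀⟩ = 1 for at least one α₀ ∈ Δ⁺. Then there is exactly one index j with ⟨Z,πⱼ⟩ ≠ 0; for this index one has ⟨Z,πⱼ⟩ = 1 and aⱼ = 1 (the simple root πⱼ occurs in the maximal root with coefficient 1). -/
/-! Write `zᵢ = ⟨Z, πᵢ⟩ ∈ {0, 1}`. Pairing `Z` with the maximal root gives
`∑ aᵢ zᵢ = ⟨Z, β⟩ ≤ 1`, a sum of nonnegative terms in which every index with `zᵢ = 1`
contributes `aᵢ ≥ 1`. So at most one `zᵢ` is nonzero, and its coefficient `aᵢ` is `1`.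
At least one is nonzero, because `⟨Z, α₀⟩ = 1` is a combination of the `zᵢ`. -/

open RealInnerProductSpace

/-- Let `Π = {π₁,…,π_r}` be a linearly independent set of simple roots inside a finite set
`Δ⁺` of positive roots (every positive root is a nonnegative-integer combination of simple
roots), and let `β = ∑ aᵢπᵢ` be a maximal root (all `aᵢ ≥ 1` integers, and `β - α` is a
nonnegative combination of the simple roots for every `α ∈ Δ⁺`).  If `⟨Z,α⟩ ∈ {0,1}` for all
`α ∈ Δ⁺` and `⟨Z,α₀⟩ = 1` for some `α₀ ∈ Δ⁺`, then there is exactly one index `j` with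
`⟨Z,πⱼ⟩ ≠ 0`; for this index `⟨Z,πⱼ⟩ = 1` and `aⱼ = 1`. -/
theorem stmt12 {V : Type*} [NormedAddCommGroup V] [InnerProductSpace ℝ V]
    [FiniteDimensional ℝ V]
    (r : ℕ) (sr : Fin r → V)
    (hind : LinearIndependent ℝ sr)
    (Δ : Finset V)
    (hsrΔ : ∀ i, sr i ∈ Δ)
    (hcoef : ∀ α ∈ Δ, ∃ c : Fin r → ℕ, α = ∑ i, (c i : ℝ) • sr i)
    (a : Fin r → ℕ) (ha : ∀ i, 1 ≤ a i)
    (β : V) (hβ : β = ∑ i, (a i : ℝ) • sr i) (hβΔ : β ∈ Δ)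
    (hmax : ∀ α ∈ Δ, ∃ c : Fin r → ℝ, (∀ i, 0 ≤ c i) ∧ β - α = ∑ i, c i • sr i)
    (Z : V)
    (hZ : ∀ α ∈ Δ, ⟪Z, α⟫ = 0 ∨ ⟪Z, α⟫ = 1)
    (hZ1 : ∃ α ∈ Δ, ⟪Z, α⟫ = 1) :
    (∃! j : Fin r, ⟪Z, sr j⟫ ≠ 0) ∧
    (∀ j : Fin r, ⟪Z, sr j⟫ ≠ 0 → ⟪Z, sr j⟫ = 1 ∧ a j = 1) := by
  have hz : ∀ i, ⟪Z, sr i⟫ = 0 ∨ ⟪Z, sr i⟫ = 1 := fun i => hZ _ (hsrΔ i)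
  have ha' : ∀ i, (1 : ℝ) ≤ a i := fun i => by exact_mod_cast ha i
  have hsum : ∑ i, (a i : ℝ) * ⟪Z, sr i⟫ ≤ 1 := by
    have h : ⟪Z, β⟫ = ∑ i, (a i : ℝ) * ⟪Z, sr i⟫ := by
      rw [hβ, inner_sum]
      simp only [real_inner_smul_right]
    rw [← h]
    rcases hZ β hβΔ with h | h <;> rw [h]
    exact zero_le_one
  have hnn : ∀ i ∈ Finset.univ, 0 ≤ (a i : ℝ) * ⟪Z, sr i⟫ := fun i _ => by
    rcases hz i with h | h <;> simp [h]
  have hex : ∃ j, ⟪Z, sr j⟫ ≠ 0 := by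
    by_contra! h0
    obtain ⟨α, hα, hα1⟩ := hZ1
    obtain ⟨c, rfl⟩ := hcoef α hα
    simp [inner_sum, real_inner_smul_right, h0] at hα1
  obtain ⟨j, hj⟩ := hex
  refine ⟨⟨j, hj, fun k hk => ?_⟩, fun k hk => ?_⟩
  · by_contra hne
    have h2 := Finset.add_le_sum hnn (Finset.mem_univ k) (Finset.mem_univ j) hne
    rw [(hz j).resolve_left hj, (hz k).resolve_left hk] at h2
    linarith [ha' j, ha' k]
  · have h1 := Finset.single_le_sum hnn (Finset.mem_univ k)
    have hk1 := (hz k).resolve_left hk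
    rw [hk1] at h1
    have h3 : (a k : ℝ) ≤ 1 := by linarith
    exact ⟨hk1, le_antisymm (by exact_mod_cast h3) (ha k)⟩
end
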